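/- arXiv:1801.06488 — 9 statements merged into one kernel-verified Lean document; each statement's English description precedes it below -/
import Mathlib

section
/- Let C be a category and let (P, p_A, p_B, i_A, i_B) be a biproduct of objects A and B in the enrichment-free sense. Then the composite p_B ∘ i_A : A → B is a zero morphism, i.e. it is both constant and coconstant; dually, p_A ∘ i_B : B → A is also a zero morphism. -/
open CategoryTheory

universe v u

/-- A morphism `a : A ⟶ B` is constant if precomposition with anything gives the same result. -/
def IsConstantMor {C : Type u} [Category.{v} C] {A B : C} (a : A ⟶ B) : Prop :=
  ∀ ⦃X : C⦄ (f g : X ⟶ A), f ≫ a = g ≫ a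

/-- A morphism `a : A ⟶ B` is coconstant if postcomposition with anything gives the same result. -/
def IsCoconstantMor {C : Type u} [Category.{v} C] {A B : C} (a : A ⟶ B) : Prop :=
  ∀ ⦃Y : C⦄ (u v : B ⟶ Y), a ≫ u = a ≫ v

/-- `(P, pA, pB, iA, iB)` is a biproduct of `A` and `B` in the enrichment-free sense:
`(P, pA, pB)` is a product, `(P, iA, iB)` is a coproduct, `pA ∘ iA = id`, `pB ∘ iB = id`,
and the two canonical idempotents `iA ∘ pA` and `iB ∘ pB` on `P` commute. -/
structure IsEFBiproduct {C : Type u} [Category.{v} C] {A B : C} (P : C)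
    (pA : P ⟶ A) (pB : P ⟶ B) (iA : A ⟶ P) (iB : B ⟶ P) : Prop where
  isProduct : ∀ (X : C) (f : X ⟶ A) (g : X ⟶ B), ∃! h : X ⟶ P, h ≫ pA = f ∧ h ≫ pB = g
  isCoproduct : ∀ (X : C) (f : A ⟶ X) (g : B ⟶ X), ∃! h : P ⟶ X, iA ≫ h = f ∧ iB ≫ h = g
  pA_iA : iA ≫ pA = 𝟙 A
  pB_iB : iB ≫ pB = 𝟙 B
  idem_comm : (pB ≫ iB) ≫ (pA ≫ iA) = (pA ≫ iA) ≫ (pB ≫ iB)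

/-- The category `C` has zero morphisms: a family `z A B : A ⟶ B` absorbing under
pre- and postcomposition, i.e. `g ∘ z X Y ∘ f = z W Z`. -/
def HasZeroFamily (C : Type u) [Category.{v} C] : Prop :=
  ∃ z : ∀ A B : C, A ⟶ B, ∀ (W X Y Z : C) (f : W ⟶ X) (g : Y ⟶ Z), f ≫ z X Y ≫ g = z W Z

/-- In a biproduct in the enrichment-free sense, `pB ∘ iA : A ⟶ B` is a zero
morphism (both constant and coconstant), and dually so is `pA ∘ iB : B ⟶ A`. -/
theorem stmt0 {C : Type u} [Category.{v} C] {A B P : C}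
    (pA : P ⟶ A) (pB : P ⟶ B) (iA : A ⟶ P) (iB : B ⟶ P)
    (h : IsEFBiproduct P pA pB iA iB) :
    (IsConstantMor (iA ≫ pB) ∧ IsCoconstantMor (iA ≫ pB)) ∧
    (IsConstantMor (iB ≫ pA) ∧ IsCoconstantMor (iB ≫ pA)) := by
  have c := h.idem_comm
  have e1 : pB ≫ iB ≫ pA = pA ≫ iA ≫ pB ≫ iB ≫ pA := by
    have := congrArg (· ≫ pA) c
    simpa [h.pA_iA] using this
  have e2 : pB ≫ iB ≫ pA ≫ iA ≫ pB = pA ≫ iA ≫ pB := by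
    have := congrArg (· ≫ pB) c
    simpa [h.pB_iB] using this
  have e3 : iA ≫ pB ≫ iB ≫ pA ≫ iA = iA ≫ pB ≫ iB := by
    have := congrArg (iA ≫ ·) c
    simpa [reassoc_of% h.pA_iA] using this
  have e4 : iB ≫ pA ≫ iA = iB ≫ pA ≫ iA ≫ pB ≫ iB := by
    have := congrArg (iB ≫ ·) c
    simpa [reassoc_of% h.pB_iB] using this
  have k1 : ∀ {X : C} (x : X ⟶ A) (y : X ⟶ B),
      y ≫ iB ≫ pA ≫ iA ≫ pB = x ≫ iA ≫ pB := by
    intro X x y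
    obtain ⟨m, ⟨rfl, rfl⟩, -⟩ := h.isProduct X x y
    simp [e2]
  have k2 : ∀ {X : C} (x : X ⟶ A) (y : X ⟶ B),
      y ≫ iB ≫ pA = x ≫ iA ≫ pB ≫ iB ≫ pA := by
    intro X x y
    obtain ⟨m, ⟨rfl, rfl⟩, -⟩ := h.isProduct X x y
    simp [← e1]
  have k3 : ∀ {Y : C} (x : A ⟶ Y) (y : B ⟶ Y),
      iA ≫ pB ≫ iB ≫ pA ≫ x = iA ≫ pB ≫ y := by
    intro Y x y
    obtain ⟨m, ⟨rfl, rfl⟩, -⟩ := h.isCoproduct Y x y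
    simpa using congrArg (· ≫ m) e3
  have k4 : ∀ {Y : C} (x : A ⟶ Y) (y : B ⟶ Y),
      iB ≫ pA ≫ x = iB ≫ pA ≫ iA ≫ pB ≫ y := by
    intro Y x y
    obtain ⟨m, ⟨rfl, rfl⟩, -⟩ := h.isCoproduct Y x y
    simpa using congrArg (· ≫ m) e4
  refine ⟨⟨fun X f g => ?_, fun Y u v => ?_⟩, ⟨fun X f g => ?_, fun Y u v => ?_⟩⟩
  · exact (k1 f (f ≫ iA ≫ pB)).symm.trans (k1 g (f ≫ iA ≫ pB))
  · rw [Category.assoc, Category.assoc]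
    exact (k3 (iA ≫ pB ≫ u) u).symm.trans (k3 (iA ≫ pB ≫ u) v)
  · exact (k2 (f ≫ iB ≫ pA) f).trans (k2 (f ≫ iB ≫ pA) g).symm
  · rw [Category.assoc, Category.assoc]
    exact (k4 u (iB ≫ pA ≫ u)).trans (k4 v (iB ≫ pA ≫ u)).symm
end

section
/- Let C be a category in which every pair of objects admits a binary biproduct in the enrichment-free sense. Then C has zero morphisms: there is a family of morphisms 0_{A,B} : A → B, one for each pair of objects A, B, such that for every f : A → B and g : C → D one has g ∘ 0_{B,C} ∘ f = 0_{A,D}. -/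
open CategoryTheory

universe v u

theorem exists_cc {C : Type u} [Category.{v} C] {A B P : C}
    {pA : P ⟶ A} {pB : P ⟶ B} {iA : A ⟶ P} {iB : B ⟶ P}
    (H : IsEFBiproduct P pA pB iA iB) :
    IsConstantMor (iB ≫ pA) ∧ IsCoconstantMor (iB ≫ pA) := by
  have e := H.idem_comm
  have e1 : pB ≫ iB ≫ pA = pA ≫ iA ≫ pB ≫ iB ≫ pA := by
    have := congrArg (fun t => t ≫ pA) e
    simpa [H.pA_iA] using this
  have e2 : iB ≫ pA ≫ iA = iB ≫ pA ≫ iA ≫ pB ≫ iB := by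
    have := congrArg (fun t => iB ≫ t) e
    simp only [Category.assoc] at this
    rwa [← Category.assoc iB pB, H.pB_iB, Category.id_comp] at this
  have k1 : ∀ (X : C) (f : X ⟶ A) (g : X ⟶ B),
      g ≫ iB ≫ pA = f ≫ iA ≫ pB ≫ iB ≫ pA := by
    intro X f g
    obtain ⟨t, ⟨h1, h2⟩, -⟩ := H.isProduct X f g
    have := congrArg (fun s => t ≫ s) e1
    simp only [← Category.assoc, h1, h2] at this
    simpa using this
  have k2 : ∀ (Y : C) (a : A ⟶ Y) (b : B ⟶ Y),
      iB ≫ pA ≫ a = iB ≫ pA ≫ iA ≫ pB ≫ b := by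
    intro Y a b
    obtain ⟨t, ⟨h1, h2⟩, -⟩ := H.isCoproduct Y a b
    have := congrArg (fun s => s ≫ t) e2
    simpa only [Category.assoc, h1, h2] using this
  constructor
  · intro X f g
    rw [k1 X (f ≫ iB ≫ pA) f, k1 X (f ≫ iB ≫ pA) g]
  · intro Y a b
    simp only [Category.assoc]
    rw [k2 Y a (iB ≫ pA ≫ a), k2 Y b (iB ≫ pA ≫ a)]

/-- If every pair of objects of `C` admits a binary biproduct in the
enrichment-free sense, then `C` has zero morphisms. -/
theorem stmt1 {C : Type u} [Category.{v} C]
    (h : ∀ A B : C, ∃ (P : C) (pA : P ⟶ A) (pB : P ⟶ B) (iA : A ⟶ P) (iB : B ⟶ P),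
      IsEFBiproduct P pA pB iA iB) :
    HasZeroFamily C := by
  have key : ∀ A B : C, ∃ z : A ⟶ B, IsConstantMor z ∧ IsCoconstantMor z := by
    intro A B
    obtain ⟨P, pA, pB, iA, iB, H⟩ := h B A
    exact ⟨_, exists_cc H⟩
  choose z hz using key
  refine ⟨z, fun W X Y Z f g => ?_⟩
  have c1 : IsConstantMor (f ≫ z X Y ≫ g) := by
    intro T p q
    have := congrArg (fun s => s ≫ g) ((hz X Y).1 (p ≫ f) (q ≫ f))
    simpa using this
  have s1 := (hz W Z).2 (z Z W ≫ f ≫ z X Y ≫ g) (𝟙 Z)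
  have s2 := c1 (z W Z ≫ z Z W) (𝟙 W)
  simp only [Category.assoc, Category.comp_id, Category.id_comp] at s1 s2
  rw [← s2, s1]
end

section
/- Let C be a category with zero morphisms, and let (P, p_A : P → A, p_B : P → B, i_A : A → P, i_B : B → P) be such that (P, p_A, p_B) is a product of A and B, (P, i_A, i_B) is a coproduct of A and B, p_A ∘ i_A = id_A and p_B ∘ i_B = id_B. Then the equation (i_A ∘ p_A) ∘ (i_B ∘ p_B) = (i_B ∘ p_B) ∘ (i_A ∘ p_A) holds if and only if p_B ∘ i_A = 0_{A,B} and p_A ∘ i_B = 0_{B,A}. In other words, in a category with zero morphisms the enrichment-free definition of biproduct agrees with the usual one. -/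
open CategoryTheory

universe v u

/-- In a category with zero morphisms, given product/coproduct data with
`pA ∘ iA = id`, `pB ∘ iB = id`, the commutation equation of the two canonical idempotents
holds iff `pB ∘ iA` and `pA ∘ iB` are the zero morphisms. -/
theorem stmt4 {C : Type u} [Category.{v} C]
    (z : ∀ X Y : C, X ⟶ Y)
    (hz : ∀ (W X Y Z : C) (f : W ⟶ X) (g : Y ⟶ Z), f ≫ z X Y ≫ g = z W Z)
    {A B P : C} (pA : P ⟶ A) (pB : P ⟶ B) (iA : A ⟶ P) (iB : B ⟶ P)
    (hprod : ∀ (X : C) (f : X ⟶ A) (g : X ⟶ B), ∃! h : X ⟶ P, h ≫ pA = f ∧ h ≫ pB = g)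
    (hcoprod : ∀ (X : C) (f : A ⟶ X) (g : B ⟶ X), ∃! h : P ⟶ X, iA ≫ h = f ∧ iB ≫ h = g)
    (h1 : iA ≫ pA = 𝟙 A) (h2 : iB ≫ pB = 𝟙 B) :
    ((pB ≫ iB) ≫ (pA ≫ iA) = (pA ≫ iA) ≫ (pB ≫ iB)) ↔
      (iA ≫ pB = z A B ∧ iB ≫ pA = z B A) := by
  have hl : ∀ {X Y : C} (W : C) (f : X ⟶ Y), z W X ≫ f = z W Y := fun W f => by
    simpa using hz W W _ _ (𝟙 W) f
  have hr : ∀ {X Y : C} (W : C) (f : X ⟶ Y), f ≫ z Y W = z X W := fun W f => by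
    simpa using hz _ _ W W f (𝟙 W)
  constructor
  · intro h
    constructor
    · obtain ⟨k, ⟨ka, kb⟩, -⟩ := hprod A (𝟙 A) (z A B)
      have e : k ≫ ((pB ≫ iB) ≫ (pA ≫ iA)) ≫ pB = k ≫ ((pA ≫ iA) ≫ (pB ≫ iB)) ≫ pB := by
        rw [h]
      simp only [Category.assoc, h2, Category.comp_id] at e
      rw [reassoc_of% ka, reassoc_of% kb, hl] at e
      exact e.symm
    · obtain ⟨k, ⟨ka, kb⟩, -⟩ := hprod B (z B A) (𝟙 B)
      have e : k ≫ ((pB ≫ iB) ≫ (pA ≫ iA)) ≫ pA = k ≫ ((pA ≫ iA) ≫ (pB ≫ iB)) ≫ pA := by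
        rw [h]
      simp only [Category.assoc, h1, Category.comp_id] at e
      rw [reassoc_of% ka, reassoc_of% kb, hl] at e
      exact e
  · rintro ⟨ha, hb⟩
    simp only [Category.assoc]
    rw [reassoc_of% ha, reassoc_of% hb, hz, hz]
end

section
/- Let (P, p_A, p_B, i_A, i_B) and (Q, q_A, q_B, j_A, j_B) be two biproducts of A and B in the enrichment-free sense in a category C. Then there exists a unique isomorphism f : P → Q compatible with the biproduct structures, i.e. satisfying q_A ∘ f = p_A, q_B ∘ f = p_B, f ∘ i_A = j_A and f ∘ i_B = j_B. In particular, the unique isomorphism P → Q compatible with the product structures coincides with the unique isomorphism P → Q compatible with the coproduct structures. -/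
open CategoryTheory

universe v u

theorem efSwap {C : Type u} [Category.{v} C] {A B P : C}
    {pA : P ⟶ A} {pB : P ⟶ B} {iA : A ⟶ P} {iB : B ⟶ P}
    (h : IsEFBiproduct P pA pB iA iB) : IsEFBiproduct P pB pA iB iA where
  isProduct X f g := by
    obtain ⟨k, hk, hu⟩ := h.isProduct X g f
    exact ⟨k, ⟨hk.2, hk.1⟩, fun y hy => hu y ⟨hy.2, hy.1⟩⟩
  isCoproduct X f g := by
    obtain ⟨k, hk, hu⟩ := h.isCoproduct X g f
    exact ⟨k, ⟨hk.2, hk.1⟩, fun y hy => hu y ⟨hy.2, hy.1⟩⟩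
  pA_iA := h.pB_iB
  pB_iB := h.pA_iA
  idem_comm := h.idem_comm.symm

theorem efConst {C : Type u} [Category.{v} C] {A B P : C}
    {pA : P ⟶ A} {pB : P ⟶ B} {iA : A ⟶ P} {iB : B ⟶ P}
    (h : IsEFBiproduct P pA pB iA iB) : IsConstantMor (iA ≫ pB) := by
  have key : ∀ (X : C) (f : X ⟶ A) (b : X ⟶ B), b ≫ iB ≫ pA ≫ iA = f ≫ iA ≫ pB ≫ iB := by
    intro X f b
    obtain ⟨k, ⟨ha, hb⟩, -⟩ := h.isProduct X f b
    have := congrArg (fun t => k ≫ t) h.idem_comm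
    rw [← ha, ← hb]
    simpa using this
  intro X f g
  have e : f ≫ iA ≫ pB ≫ iB = g ≫ iA ≫ pB ≫ iB :=
    (key X f (f ≫ iA ≫ pB)).symm.trans (key X g (f ≫ iA ≫ pB))
  have := congrArg (fun t => t ≫ pB) e
  simpa [h.pB_iB] using this

theorem efCoconst {C : Type u} [Category.{v} C] {A B P : C}
    {pA : P ⟶ A} {pB : P ⟶ B} {iA : A ⟶ P} {iB : B ⟶ P}
    (h : IsEFBiproduct P pA pB iA iB) : IsCoconstantMor (iA ≫ pB) := by
  have key : ∀ (Y : C) (a : A ⟶ Y) (b : B ⟶ Y), pB ≫ iB ≫ pA ≫ a = pA ≫ iA ≫ pB ≫ b := by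
    intro Y a b
    obtain ⟨k, ⟨ha, hb⟩, -⟩ := h.isCoproduct Y a b
    have := congrArg (fun t => t ≫ k) h.idem_comm
    rw [← ha, ← hb]
    simpa using this
  intro Y a b
  have e : pA ≫ iA ≫ pB ≫ a = pA ≫ iA ≫ pB ≫ b :=
    (key Y (iA ≫ pB ≫ a) a).symm.trans (key Y (iA ≫ pB ≫ a) b)
  have := congrArg (fun t => iA ≫ t) e
  simpa [reassoc_of% h.pA_iA] using this

theorem efZeroEq {C : Type u} [Category.{v} C] {A B P Q : C}
    {pA : P ⟶ A} {pB : P ⟶ B} {iA : A ⟶ P} {iB : B ⟶ P}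
    {qA : Q ⟶ A} {qB : Q ⟶ B} {jA : A ⟶ Q} {jB : B ⟶ Q}
    (h1 : IsEFBiproduct P pA pB iA iB) (h2 : IsEFBiproduct Q qA qB jA jB) :
    iA ≫ pB = jA ≫ qB := by
  have e1 := efConst h2 (𝟙 A) ((iA ≫ pB) ≫ jB ≫ qA)
  have e2 := efCoconst h1 (𝟙 B) ((jB ≫ qA) ≫ jA ≫ qB)
  rw [Category.id_comp] at e1
  rw [Category.comp_id] at e2
  refine e2.trans (Eq.trans ?_ e1.symm)
  simp only [Category.assoc]

theorem efCompat {C : Type u} [Category.{v} C] {A B P Q : C}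
    {pA : P ⟶ A} {pB : P ⟶ B} {iA : A ⟶ P} {iB : B ⟶ P}
    {qA : Q ⟶ A} {qB : Q ⟶ B} {jA : A ⟶ Q} {jB : B ⟶ Q}
    (h1 : IsEFBiproduct P pA pB iA iB) (h2 : IsEFBiproduct Q qA qB jA jB)
    (g : P ⟶ Q) (ha : g ≫ qA = pA) (hb : g ≫ qB = pB) : iA ≫ g = jA :=
  (h2.isProduct A (𝟙 A) (iA ≫ pB)).unique
    ⟨by rw [Category.assoc, ha, h1.pA_iA], by rw [Category.assoc, hb]⟩
    ⟨h2.pA_iA, (efZeroEq h1 h2).symm⟩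

/-- Two biproducts (in the enrichment-free sense) of `A` and `B` are related
by a unique isomorphism compatible with the biproduct structures; in particular the unique
morphism compatible with the product structures coincides with the unique morphism
compatible with the coproduct structures. -/
theorem stmt5 {C : Type u} [Category.{v} C] {A B P Q : C}
    {pA : P ⟶ A} {pB : P ⟶ B} {iA : A ⟶ P} {iB : B ⟶ P}
    {qA : Q ⟶ A} {qB : Q ⟶ B} {jA : A ⟶ Q} {jB : B ⟶ Q}
    (h1 : IsEFBiproduct P pA pB iA iB) (h2 : IsEFBiproduct Q qA qB jA jB) :
    (∃! f : P ⟶ Q, IsIso f ∧ f ≫ qA = pA ∧ f ≫ qB = pB ∧ iA ≫ f = jA ∧ iB ≫ f = jB) ∧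
    (∀ g h : P ⟶ Q, (g ≫ qA = pA ∧ g ≫ qB = pB) → (iA ≫ h = jA ∧ iB ≫ h = jB) → g = h) := by
  obtain ⟨f, ⟨fa, fb⟩, fu⟩ := h2.isProduct P pA pB
  obtain ⟨k, ⟨ka, kb⟩, -⟩ := h1.isProduct Q qA qB
  have hiA : iA ≫ f = jA := efCompat h1 h2 f fa fb
  have hiB : iB ≫ f = jB := efCompat (efSwap h1) (efSwap h2) f fb fa
  have hfk : f ≫ k = 𝟙 P := (h1.isProduct P pA pB).unique
    ⟨by rw [Category.assoc, ka, fa], by rw [Category.assoc, kb, fb]⟩ ⟨by simp, by simp⟩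
  have hkf : k ≫ f = 𝟙 Q := (h2.isProduct Q qA qB).unique
    ⟨by rw [Category.assoc, fa, ka], by rw [Category.assoc, fb, kb]⟩ ⟨by simp, by simp⟩
  refine ⟨⟨f, ⟨⟨k, hfk, hkf⟩, fa, fb, hiA, hiB⟩, fun y hy => fu y ⟨hy.2.1, hy.2.2.1⟩⟩, ?_⟩
  intro g h hg hh
  rw [fu g hg]
  exact (h1.isCoproduct Q jA jB).unique ⟨hiA, hiB⟩ hh
end

section
/- Let C be a category such that the diagonal functor Δ : C → C × C admits a functor ⊕ : C × C → C that is simultaneously left adjoint and right adjoint to Δ (an ambiadjoint), and such that for all objects A, B the unit (i_A, i_B) : (A, B) → (A ⊕ B, A ⊕ B) of the adjunction ⊕ ⊣ Δ is a section of the counit (p_A, p_B) : (A ⊕ B, A ⊕ B) → (A, B) of the adjunction Δ ⊣ ⊕, i.e. p_A ∘ i_A = id_A and p_B ∘ i_B = id_B. Then every pair of objects A, B of C has a biproduct in the enrichment-free sense, given by (A ⊕ B, p_A, p_B, i_A, i_B). -/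
open CategoryTheory

universe v u

/-- If the diagonal `Δ : C ⥤ C × C` has an ambiadjoint `F = ⊕` such that the
unit of `⊕ ⊣ Δ` is a (componentwise) section of the counit of `Δ ⊣ ⊕`, then every pair of
objects has a biproduct in the enrichment-free sense, given by this data. -/
theorem stmt6 {C : Type u} [Category.{v} C] (F : C × C ⥤ C)
    (adj1 : F ⊣ Functor.diag C) (adj2 : Functor.diag C ⊣ F)
    (hsec : ∀ A B : C,
      (adj1.unit.app (A, B)).1 ≫ (adj2.counit.app (A, B)).1 = 𝟙 A ∧
      (adj1.unit.app (A, B)).2 ≫ (adj2.counit.app (A, B)).2 = 𝟙 B) :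
    ∀ A B : C, IsEFBiproduct (F.obj (A, B))
      (adj2.counit.app (A, B)).1 (adj2.counit.app (A, B)).2
      (adj1.unit.app (A, B)).1 (adj1.unit.app (A, B)).2 := by
  have nz : ∀ {A A' B B' : C} (f : A ⟶ A') (g : B ⟶ B'),
      ((adj1.unit.app (A, B)).1 ≫ (adj2.counit.app (A, B)).2) ≫ g =
      f ≫ (adj1.unit.app (A', B')).1 ≫ (adj2.counit.app (A', B')).2 := by
    intro A A' B B' f g
    have h1 : f ≫ (adj1.unit.app (A', B')).1 = (adj1.unit.app (A, B)).1 ≫ F.map (X := (A, B)) (Y := (A', B')) (Prod.mkHom f g) :=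
      congrArg (fun t => t.1) (adj1.unit.naturality (X := (A, B)) (Y := (A', B')) (Prod.mkHom f g))
    have h2 : F.map (X := (A, B)) (Y := (A', B')) (Prod.mkHom f g) ≫ (adj2.counit.app (A', B')).2 = (adj2.counit.app (A, B)).2 ≫ g :=
      congrArg (fun t => t.2) (adj2.counit.naturality (X := (A, B)) (Y := (A', B')) (Prod.mkHom f g))
    rw [Category.assoc, ← h2, ← Category.assoc f, h1, Category.assoc]
  have nw : ∀ {A A' B B' : C} (f : A ⟶ A') (g : B ⟶ B'),
      ((adj1.unit.app (B, A)).2 ≫ (adj2.counit.app (B, A)).1) ≫ g =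
      f ≫ (adj1.unit.app (B', A')).2 ≫ (adj2.counit.app (B', A')).1 := by
    intro A A' B B' f g
    have h1 : f ≫ (adj1.unit.app (B', A')).2 = (adj1.unit.app (B, A)).2 ≫ F.map (X := (B, A)) (Y := (B', A')) (Prod.mkHom g f) :=
      congrArg (fun t => t.2) (adj1.unit.naturality (X := (B, A)) (Y := (B', A')) (Prod.mkHom g f))
    have h2 : F.map (X := (B, A)) (Y := (B', A')) (Prod.mkHom g f) ≫ (adj2.counit.app (B', A')).1 = (adj2.counit.app (B, A)).1 ≫ g :=
      congrArg (fun t => t.1) (adj2.counit.naturality (X := (B, A)) (Y := (B', A')) (Prod.mkHom g f))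
    rw [Category.assoc, ← h2, ← Category.assoc f, h1, Category.assoc]
  obtain ⟨z, hz⟩ : ∃ z : ∀ A B : C, A ⟶ B, ∀ A B,
      z A B = (adj1.unit.app (A, B)).1 ≫ (adj2.counit.app (A, B)).2 := ⟨_, fun _ _ => rfl⟩
  obtain ⟨w, hw⟩ : ∃ w : ∀ A B : C, A ⟶ B, ∀ A B,
      w A B = (adj1.unit.app (B, A)).2 ≫ (adj2.counit.app (B, A)).1 := ⟨_, fun _ _ => rfl⟩
  have nz' : ∀ {A A' B B' : C} (f : A ⟶ A') (g : B ⟶ B'), z A B ≫ g = f ≫ z A' B' := by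
    intro A A' B B' f g; rw [hz, hz]; exact nz f g
  have nw' : ∀ {A A' B B' : C} (f : A ⟶ A') (g : B ⟶ B'), w A B ≫ g = f ≫ w A' B' := by
    intro A A' B B' f g; rw [hw, hw]; exact nw f g
  have zr : ∀ {A B B' : C} (g : B ⟶ B'), z A B ≫ g = z A B' := fun g => by
    simpa using nz' (𝟙 _) g
  have zl : ∀ {A A' B : C} (f : A ⟶ A'), f ≫ z A' B = z A B := fun f => by
    simpa using (nz' f (𝟙 _)).symm
  have wr : ∀ {A B B' : C} (g : B ⟶ B'), w A B ≫ g = w A B' := fun g => by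
    simpa using nw' (𝟙 _) g
  have wl : ∀ {A A' B : C} (f : A ⟶ A'), f ≫ w A' B = w A B := fun f => by
    simpa using (nw' f (𝟙 _)).symm
  have zw : ∀ A B, z A B = w A B := fun A B => by
    rw [← zr (w B B), wl]
  intro A B
  refine ⟨?_, ?_, (hsec A B).1, (hsec A B).2, ?_⟩
  · intro X f g
    have key : ∀ h : X ⟶ F.obj (A, B),
        (h ≫ (adj2.counit.app (A, B)).1 = f ∧ h ≫ (adj2.counit.app (A, B)).2 = g) ↔
        (adj2.homEquiv X (A, B)).symm h = Prod.mkHom f g := by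
      intro h
      rw [Adjunction.homEquiv_counit]
      constructor
      · rintro ⟨h1, h2⟩; exact Prod.ext h1 h2
      · intro e; exact ⟨congrArg (fun t => t.1) e, congrArg (fun t => t.2) e⟩
    simp only [key, Equiv.symm_apply_eq]
    exact ⟨_, rfl, fun _ h => h⟩
  · intro X f g
    have key : ∀ h : F.obj (A, B) ⟶ X,
        ((adj1.unit.app (A, B)).1 ≫ h = f ∧ (adj1.unit.app (A, B)).2 ≫ h = g) ↔
        (adj1.homEquiv (A, B) X) h = Prod.mkHom f g := by
      intro h
      rw [Adjunction.homEquiv_unit]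
      constructor
      · rintro ⟨h1, h2⟩; exact Prod.ext h1 h2
      · intro e; exact ⟨congrArg (fun t => t.1) e, congrArg (fun t => t.2) e⟩
    simp only [key, ← Equiv.eq_symm_apply]
    exact ⟨_, rfl, fun _ h => h⟩
  · have e1 : ((adj2.counit.app (A, B)).2 ≫ (adj1.unit.app (A, B)).2) ≫
        ((adj2.counit.app (A, B)).1 ≫ (adj1.unit.app (A, B)).1) = w _ _ := by
      rw [← wr (adj1.unit.app (A, B)).1, ← wl (adj2.counit.app (A, B)).2, hw]
      simp only [Category.assoc]; rfl
    have e2 : ((adj2.counit.app (A, B)).1 ≫ (adj1.unit.app (A, B)).1) ≫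
        ((adj2.counit.app (A, B)).2 ≫ (adj1.unit.app (A, B)).2) = z _ _ := by
      rw [← zr (adj1.unit.app (A, B)).2, ← zl (adj2.counit.app (A, B)).1, hz]
      simp only [Category.assoc]; rfl
    exact e1.trans ((zw _ _).symm.trans e2.symm)
end

section
/- Let C be a category and suppose the diagonal functor Δ : C → C × C has an ambiadjoint ⊕ : C × C → C. Write (i_A, i_B) : (A, B) → (A ⊕ B, A ⊕ B) for the unit of ⊕ ⊣ Δ and (p_A, p_B) : (A ⊕ B, A ⊕ B) → (A, B) for the counit of Δ ⊣ ⊕. Then for all objects A, B the composite p_B ∘ i_A : A → B is both constant and coconstant; consequently C has zero morphisms. -/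
open CategoryTheory

universe v u

/-- If the diagonal `Δ : C ⥤ C × C` has an ambiadjoint `F = ⊕` (with unit
`(iA, iB)` of `⊕ ⊣ Δ` and counit `(pA, pB)` of `Δ ⊣ ⊕`), then each `pB ∘ iA : a ⟶ b` is
both constant and coconstant; consequently `C` has zero morphisms. -/
theorem stmt8 {C : Type u} [Category.{v} C] (F : C × C ⥤ C)
    (adj1 : F ⊣ Functor.diag C) (adj2 : Functor.diag C ⊣ F) :
    (∀ A B : C,
      IsConstantMor ((adj1.unit.app (A, B)).1 ≫ (adj2.counit.app (A, B)).2) ∧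
      IsCoconstantMor ((adj1.unit.app (A, B)).1 ≫ (adj2.counit.app (A, B)).2)) ∧
    HasZeroFamily C := by
  have key : ∀ (A A' B B' : C) (f : A ⟶ A') (g : B ⟶ B'),
      f ≫ ((adj1.unit.app (A', B')).1 ≫ (adj2.counit.app (A', B')).2) =
        ((adj1.unit.app (A, B)).1 ≫ (adj2.counit.app (A, B)).2) ≫ g := by
    intro A A' B B' f g
    let m : (A, B) ⟶ (A', B') := Prod.mkHom f g
    have h1 : f ≫ (adj1.unit.app (A', B')).1 = (adj1.unit.app (A, B)).1 ≫ F.map m :=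
      congrArg (fun k => k.1) (adj1.unit.naturality m)
    have h2 : F.map m ≫ (adj2.counit.app (A', B')).2 = (adj2.counit.app (A, B)).2 ≫ g :=
      congrArg (fun k => k.2) (adj2.counit.naturality m)
    calc _ = (f ≫ (adj1.unit.app (A', B')).1) ≫ (adj2.counit.app (A', B')).2 :=
          (Category.assoc _ _ _).symm
      _ = ((adj1.unit.app (A, B)).1 ≫ F.map m) ≫ (adj2.counit.app (A', B')).2 := by rw [h1]
      _ = (adj1.unit.app (A, B)).1 ≫ (F.map m ≫ (adj2.counit.app (A', B')).2) :=
          Category.assoc _ _ _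
      _ = (adj1.unit.app (A, B)).1 ≫ ((adj2.counit.app (A, B)).2 ≫ g) := by rw [h2]
      _ = _ := (Category.assoc _ _ _).symm
  refine ⟨fun A B => ⟨fun X f g => ?_, fun Y u v => ?_⟩,
    fun A B => (adj1.unit.app (A, B)).1 ≫ (adj2.counit.app (A, B)).2, ?_⟩
  · exact (key X A B B f (𝟙 B)).trans (key X A B B g (𝟙 B)).symm
  · exact (key A A B Y (𝟙 A) u).symm.trans (key A A B Y (𝟙 A) v)
  · intro W X Y Z f g
    have h1 := (key X X Y Z (𝟙 X) g).symm.trans (Category.id_comp _)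
    have h2 := (key W X Z Z f (𝟙 Z)).trans (Category.comp_id _)
    exact (congrArg (fun k => f ≫ k) h1).trans h2
end

section
/- Let C be a category, let (A ⊕ B, p_A, p_B, i_A, i_B) be a biproduct of A and B in the enrichment-free sense, and let (P, q_{AB}, q_C, j_{AB}, j_C) be a biproduct of A ⊕ B and C in the enrichment-free sense. Then P, equipped with the projections p_A ∘ q_{AB}, p_B ∘ q_{AB}, q_C and the injections j_{AB} ∘ i_A, j_{AB} ∘ i_B, j_C, is a ternary biproduct of A, B, C: it is a product of A, B, C via these projections, a coproduct of A, B, C via these injections, each projection composed with the corresponding injection is the identity, and the three idempotents on P given by (injection ∘ projection) pairwise commute. -/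
open CategoryTheory

universe v u

theorem IsEFBiproduct.comm_aux {C : Type u} [Category.{v} C] {A B P : C}
    {p : P ⟶ A} {q : P ⟶ B} {i : A ⟶ P} {j : B ⟶ P}
    (h : IsEFBiproduct P p q i j) (e : A ⟶ A) :
    (p ≫ e ≫ i) ≫ (q ≫ j) = (q ≫ j) ≫ (p ≫ e ≫ i) := by
  have hA := h.pA_iA
  have hB := h.pB_iB
  have hc : q ≫ j ≫ p ≫ i = p ≫ i ≫ q ≫ j := by simpa using h.idem_comm
  have H1 : i ≫ q ≫ j ≫ p ≫ i = i ≫ q ≫ j := by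
    rw [hc, reassoc_of% hA]
  have H2 : j ≫ p ≫ i = j ≫ p ≫ i ≫ q ≫ j := by
    rw [← hc, reassoc_of% hB]
  have H3 : q ≫ j ≫ p ≫ i ≫ q = p ≫ i ≫ q := by
    have := congrArg (· ≫ q) hc
    simpa [hB] using this
  -- the map `i ≫ q` is constant
  have K : (p ≫ e) ≫ i ≫ q = q ≫ j ≫ p ≫ i ≫ q := by
    obtain ⟨m, ⟨m1, m2⟩, -⟩ := h.isProduct P (p ≫ e) q
    have := congrArg (m ≫ ·) H3
    simp only [reassoc_of% m1, reassoc_of% m2] at this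
    simpa using this.symm
  -- the map `j ≫ p` is coconstant
  have L : j ≫ p ≫ e ≫ i = j ≫ p ≫ i ≫ q ≫ j := by
    obtain ⟨m, ⟨m1, m2⟩, -⟩ := h.isCoproduct P (e ≫ i) j
    have := congrArg (· ≫ m) H2
    simpa only [Category.assoc, m1, m2] using this
  have K' := congrArg (· ≫ j) K
  simp only [Category.assoc] at K' ⊢
  rw [K', L]

/-- If `(AB, pA, pB, iA, iB)` is a biproduct of `A, B` and
`(P, qAB, qC, jAB, jC)` is a biproduct of `AB, C'` (in the enrichment-free sense), then
`P` with projections `pA ∘ qAB, pB ∘ qAB, qC` and injections `jAB ∘ iA, jAB ∘ iB, jC` is a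
ternary biproduct of `A, B, C'`: a product and a coproduct via this data, each projection
composed with the corresponding injection is the identity, and the three canonical
idempotents on `P` pairwise commute. -/
theorem stmt10 {C : Type u} [Category.{v} C] {A B C' : C}
    {AB P : C} {pA : AB ⟶ A} {pB : AB ⟶ B} {iA : A ⟶ AB} {iB : B ⟶ AB}
    {qAB : P ⟶ AB} {qC : P ⟶ C'} {jAB : AB ⟶ P} {jC : C' ⟶ P}
    (h1 : IsEFBiproduct AB pA pB iA iB) (h2 : IsEFBiproduct P qAB qC jAB jC) :
    (∀ (X : C) (f : X ⟶ A) (g : X ⟶ B) (k : X ⟶ C'),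
      ∃! m : X ⟶ P, m ≫ (qAB ≫ pA) = f ∧ m ≫ (qAB ≫ pB) = g ∧ m ≫ qC = k) ∧
    (∀ (X : C) (f : A ⟶ X) (g : B ⟶ X) (k : C' ⟶ X),
      ∃! m : P ⟶ X, (iA ≫ jAB) ≫ m = f ∧ (iB ≫ jAB) ≫ m = g ∧ jC ≫ m = k) ∧
    ((iA ≫ jAB) ≫ (qAB ≫ pA) = 𝟙 A ∧ (iB ≫ jAB) ≫ (qAB ≫ pB) = 𝟙 B ∧ jC ≫ qC = 𝟙 C') ∧
    (((qAB ≫ pA) ≫ (iA ≫ jAB)) ≫ ((qAB ≫ pB) ≫ (iB ≫ jAB)) =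
        ((qAB ≫ pB) ≫ (iB ≫ jAB)) ≫ ((qAB ≫ pA) ≫ (iA ≫ jAB)) ∧
      ((qAB ≫ pA) ≫ (iA ≫ jAB)) ≫ (qC ≫ jC) = (qC ≫ jC) ≫ ((qAB ≫ pA) ≫ (iA ≫ jAB)) ∧
      ((qAB ≫ pB) ≫ (iB ≫ jAB)) ≫ (qC ≫ jC) = (qC ≫ jC) ≫ ((qAB ≫ pB) ≫ (iB ≫ jAB))) := by
  refine ⟨?_, ?_, ⟨?_, ?_, h2.pB_iB⟩, ?_, ?_, ?_⟩
  · intro X f g k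
    obtain ⟨a, ⟨a1, a2⟩, ha⟩ := h1.isProduct X f g
    obtain ⟨m, ⟨m1, m2⟩, hm⟩ := h2.isProduct X a k
    refine ⟨m, ⟨by rw [reassoc_of% m1, a1], by rw [reassoc_of% m1, a2], m2⟩, ?_⟩
    rintro y ⟨y1, y2, y3⟩
    exact hm y ⟨ha _ ⟨by simpa using y1, by simpa using y2⟩, y3⟩
  · intro X f g k
    obtain ⟨a, ⟨a1, a2⟩, ha⟩ := h1.isCoproduct X f g
    obtain ⟨m, ⟨m1, m2⟩, hm⟩ := h2.isCoproduct X a k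
    refine ⟨m, ⟨by rw [Category.assoc, m1, a1], by rw [Category.assoc, m1, a2], m2⟩, ?_⟩
    rintro y ⟨y1, y2, y3⟩
    exact hm y ⟨ha _ ⟨by simpa using y1, by simpa using y2⟩, y3⟩
  · have hA := h2.pA_iA
    rw [Category.assoc, reassoc_of% hA, h1.pA_iA]
  · have hA := h2.pA_iA
    rw [Category.assoc, reassoc_of% hA, h1.pB_iB]
  · have hA := h2.pA_iA
    have hc := congrArg (fun t => qAB ≫ t ≫ jAB) h1.idem_comm
    simp only [Category.assoc, reassoc_of% hA] at hc ⊢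
    exact hc.symm
  · simpa using h2.comm_aux (pA ≫ iA)
  · simpa using h2.comm_aux (pB ≫ iB)
end

section
/- Let C be a category and let (P, p_A, p_B, i_A, i_B) be a biproduct of A and B in the enrichment-free sense. Then for any object X and any morphisms f, g : X → A, one has p_B ∘ i_A ∘ f = p_B ∘ i_A ∘ g (constancy), and for any morphisms u, v : B → Y one has u ∘ p_B ∘ i_A = v ∘ p_B ∘ i_A (coconstancy); moreover the composite (i_B ∘ p_B) ∘ (i_A ∘ p_A) : A ⊕ B → A ⊕ B is idempotent. -/
open CategoryTheory

universe v u

/-- For a biproduct (in the enrichment-free sense), `pB ∘ iA` is constant and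
coconstant, and the composite `(iB ∘ pB) ∘ (iA ∘ pA)` (written diagrammatically as
`(pA ≫ iA) ≫ (pB ≫ iB)`) is idempotent. -/
theorem stmt15 {C : Type u} [Category.{v} C] {A B P : C}
    {pA : P ⟶ A} {pB : P ⟶ B} {iA : A ⟶ P} {iB : B ⟶ P}
    (h : IsEFBiproduct P pA pB iA iB) :
    (∀ (X : C) (f g : X ⟶ A), f ≫ (iA ≫ pB) = g ≫ (iA ≫ pB)) ∧
    (∀ (Y : C) (u v : B ⟶ Y), (iA ≫ pB) ≫ u = (iA ≫ pB) ≫ v) ∧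
    ((pA ≫ iA) ≫ (pB ≫ iB)) ≫ ((pA ≫ iA) ≫ (pB ≫ iB)) = (pA ≫ iA) ≫ (pB ≫ iB) := by
  have cm : pB ≫ iB ≫ pA ≫ iA = pA ≫ iA ≫ pB ≫ iB := by simpa using h.idem_comm
  have hA := h.pA_iA
  have hB := h.pB_iB
  have hA' : ∀ {Z : C} (t : A ⟶ Z), iA ≫ pA ≫ t = t := fun t => by
    rw [← Category.assoc, hA, Category.id_comp]
  have key : iA ≫ pB ≫ iB ≫ pA ≫ iA ≫ pB = iA ≫ pB := by
    have := congrArg (fun t => iA ≫ t ≫ pB) cm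
    simpa [hA', hB] using this
  refine ⟨fun X f g => ?_, fun Y u v => ?_, ?_⟩
  · obtain ⟨k, ⟨k1, k2⟩, -⟩ := h.isProduct X f (g ≫ iA ≫ pB)
    calc f ≫ iA ≫ pB = k ≫ (pA ≫ iA ≫ pB ≫ iB) ≫ pB := by simp [← k1, hB]
      _ = (k ≫ pB) ≫ iB ≫ pA ≫ iA ≫ pB := by rw [← cm]; simp
      _ = g ≫ iA ≫ pB := by rw [k2]; simp [key]
  · obtain ⟨k, ⟨k1, k2⟩, -⟩ := h.isCoproduct Y ((iA ≫ pB) ≫ v) u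
    calc (iA ≫ pB) ≫ u = iA ≫ (pA ≫ iA ≫ pB ≫ iB) ≫ k := by simp [← k2, hA']
      _ = (iA ≫ pB ≫ iB ≫ pA) ≫ (iA ≫ k) := by rw [← cm]; simp
      _ = (iA ≫ pB ≫ iB ≫ pA ≫ iA ≫ pB) ≫ v := by rw [k1]; simp
      _ = (iA ≫ pB) ≫ v := by rw [key]
  · have := congrArg (fun t => pA ≫ t ≫ iB) key
    simpa using this
end

section
/- Let C be a category with zero morphisms in which every pair of objects has a biproduct in the enrichment-free sense. Then for all objects A, B the zero morphism 0_{A,B} : A → B equals p_B ∘ i_A where (A ⊕ B, p_A, p_B, i_A, i_B) is any biproduct of A and B; in particular p_B ∘ i_A does not depend on the choice of biproduct. -/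
open CategoryTheory

universe v u

/-- In a category with zero morphisms in which every pair of objects has a
biproduct in the enrichment-free sense, for any biproduct `(P, pA, pB, iA, iB)` of `A, B`
one has `pB ∘ iA = 0_{A,B}`; in particular `pB ∘ iA` is independent of the choice of
biproduct. -/
theorem stmt16 {C : Type u} [Category.{v} C]
    (z : ∀ X Y : C, X ⟶ Y)
    (hz : ∀ (W X Y Z : C) (f : W ⟶ X) (g : Y ⟶ Z), f ≫ z X Y ≫ g = z W Z)
    (hbi : ∀ A B : C, ∃ (P : C) (pA : P ⟶ A) (pB : P ⟶ B) (iA : A ⟶ P) (iB : B ⟶ P),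
      IsEFBiproduct P pA pB iA iB)
    {A B P : C} (pA : P ⟶ A) (pB : P ⟶ B) (iA : A ⟶ P) (iB : B ⟶ P)
    (h : IsEFBiproduct P pA pB iA iB) :
    iA ≫ pB = z A B := by
  obtain ⟨k, ⟨hk1, hk2⟩, -⟩ := h.isProduct A (𝟙 A) (z A B)
  have e : (k ≫ pB) ≫ iB ≫ pA ≫ iA ≫ pB = (k ≫ pA) ≫ iA ≫ pB ≫ iB ≫ pB := by
    have := congrArg (fun t => k ≫ t ≫ pB) h.idem_comm
    simpa only [Category.assoc] using this
  rw [hk1, hk2, h.pB_iB, Category.comp_id, Category.id_comp] at e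
  have hz' := hz A A B B (𝟙 A) (iB ≫ pA ≫ iA ≫ pB)
  rw [Category.id_comp] at hz'
  exact e.symm.trans hz'
end
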